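/- Let 0 < δ < 1/2 and let p = (p_k)_{k≥0} be a sequence of positive integers with p_0 = 1, p_k dividing p_{k+1}, p_{k+1}/p_k ≥ 3 for all k, and Σ_{k=1}^∞ 2p_k/p_{k+1} < δ. Then the shift space X(p) ⊆ {0,1}^∞ obtained as the orbit closure of the Oxtoby sequence with scale p satisfies d̄^H(X(p), {0^∞, 1^∞}) > 1 − δ and d̄_M^H(M_σ(X(p)), M_σ({0^∞, 1^∞})) < δ. -/

import Mathlib

open MeasureTheory Filter Topology

namespace DbarPaper

variable {A : Type} [Fintype A] [DecidableEq A] [Inhabited A]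
  [TopologicalSpace A] [DiscreteTopology A]
  [MeasurableSpace A] [MeasurableSingletonClass A]

/-- The shift map on the full shift `𝒜^∞ = ℕ → A`. -/
def shift : (ℕ → A) → (ℕ → A) := fun x n => x (n + 1)

/-- A shift space: a nonempty, closed, shift-invariant subset of the full shift. -/
def ShiftSpace (X : Set (ℕ → A)) : Prop :=
  X.Nonempty ∧ IsClosed X ∧ ∀ x ∈ X, shift x ∈ X

/-- The word `w` appears in the sequence `x`. -/
def occursIn (w : List A) (x : ℕ → A) : Prop :=
  ∃ i : ℕ, w = List.ofFn (fun k : Fin w.length => x (i + (k : ℕ)))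

/-- The language of a set `X`: all finite words appearing in points of `X`. -/
def lang (X : Set (ℕ → A)) : Set (List A) := {w | ∃ x ∈ X, occursIn w x}

/-- Words of length `n` in the language of `X`. -/
def langN (n : ℕ) (X : Set (ℕ → A)) : Set (List A) := {w | w ∈ lang X ∧ w.length = n}

/-- The pseudometric `d̄` on the full shift. -/
noncomputable def dbar (x y : ℕ → A) : ℝ :=
  Filter.limsup
    (fun n => (((Finset.range n).filter (fun j => x j ≠ y j)).card : ℝ) / (n : ℝ))
    Filter.atTop

/-- Hausdorff "distance" between two sets induced by a `ℝ`-valued distance. -/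
noncomputable def hausdist {Z : Type*} (d : Z → Z → ℝ) (P Q : Set Z) : ℝ :=
  max (⨆ p : P, ⨅ q : Q, d p q) (⨆ q : Q, ⨅ p : P, d p q)

/-- A probability measure is shift-invariant. -/
def invariantPM (μ : ProbabilityMeasure (ℕ → A)) : Prop :=
  (μ : Measure (ℕ → A)).map shift = (μ : Measure (ℕ → A))

/-- `M_σ(X)`: shift-invariant Borel probability measures giving `X` full measure. -/
def Msigma (X : Set (ℕ → A)) : Set (ProbabilityMeasure (ℕ → A)) :=
  {μ | invariantPM μ ∧ μ X = 1}

/-- `ξ` is a joining of `μ` and `ν`: a `σ×σ`-invariant measure on the product with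
marginals `μ` and `ν`. -/
def IsJoining (ξ : Measure ((ℕ → A) × (ℕ → A))) (μ ν : ProbabilityMeasure (ℕ → A)) : Prop :=
  ξ.map (Prod.map shift shift) = ξ ∧
  ξ.map Prod.fst = (μ : Measure (ℕ → A)) ∧ ξ.map Prod.snd = (ν : Measure (ℕ → A))

/-- Ornstein's metric `d̄_M` on invariant measures. -/
noncomputable def dbarM (μ ν : ProbabilityMeasure (ℕ → A)) : ℝ :=
  sInf {r : ℝ | ∃ ξ : Measure ((ℕ → A) × (ℕ → A)),
    IsJoining ξ μ ν ∧ r = (ξ {p | p.1 0 ≠ p.2 0}).toReal}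

/-- `d̄_M`-stability of a shift space (Austin). -/
def DbarMStable (X : Set (ℕ → A)) : Prop :=
  ∀ ε : ℝ, 0 < ε → ∃ U : Set (ProbabilityMeasure (ℕ → A)), IsOpen U ∧ Msigma X ⊆ U ∧
    ∀ ν ∈ U, invariantPM ν → ∃ μ ∈ Msigma X, dbarM μ ν < ε

/-- The infinite concatenation of a sequence of (nonempty) words. -/
def concatSeq (w : ℕ → List A) : ℕ → A := fun n =>
  ((List.ofFn (fun i : Fin (n + 1) => w (i : ℕ))).flatten).getD n default

/-- The `d̄`-shadowing property. -/
def DbarShadowing (X : Set (ℕ → A)) : Prop :=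
  ∀ ε : ℝ, 0 < ε → ∃ N : ℕ, 0 < N ∧ ∀ w : ℕ → List A,
    (∀ j, w j ∈ lang X) → (∀ j, N ≤ (w j).length) →
    ∃ x' ∈ X, dbar (concatSeq w) x' < ε

/-- `U_n(X)`: the union of cylinders of words of length `n` in the language of `X`. -/
def cylNbhd (X : Set (ℕ → A)) (n : ℕ) : Set (ℕ → A) :=
  {x | List.ofFn (fun k : Fin n => x (k : ℕ)) ∈ lang X}

/-- The `n`-th (topological) Markov approximation of `X`: all sequences whose subwords of
length `n+1` belong to the language of `X`. -/
def markovApprox (X : Set (ℕ → A)) (n : ℕ) : Set (ℕ → A) :=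
  {x | ∀ i : ℕ, List.ofFn (fun k : Fin (n + 1) => x (i + (k : ℕ))) ∈ lang X}

/-- Transitivity, in terms of the language. -/
def TransitiveShift (X : Set (ℕ → A)) : Prop :=
  ∀ u ∈ lang X, ∀ w ∈ lang X, ∃ v : List A, u ++ v ++ w ∈ lang X

/-- Topological mixing, in terms of the language. -/
def MixingShift (X : Set (ℕ → A)) : Prop :=
  ∀ u ∈ lang X, ∀ w ∈ lang X, ∃ N : ℕ, ∀ m : ℕ, N ≤ m →
    ∃ v : List A, v.length = m ∧ u ++ v ++ w ∈ lang X

/-- Chain mixing: all but finitely many Markov approximations are topologically mixing. -/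
def ChainMixing (X : Set (ℕ → A)) : Prop :=
  ∃ N : ℕ, ∀ n : ℕ, N ≤ n → MixingShift (markovApprox X n)

/-- `C` is the measure center of `X`: the smallest shift space contained in `X` of full
measure for every invariant measure of `X`. -/
def IsMeasureCenter (X C : Set (ℕ → A)) : Prop :=
  ShiftSpace C ∧ C ⊆ X ∧ (∀ μ ∈ Msigma X, μ C = 1) ∧
  ∀ Y : Set (ℕ → A), ShiftSpace Y → Y ⊆ X → (∀ μ ∈ Msigma X, μ Y = 1) → C ⊆ Y

/-- Measure of the cylinder determined by a word of length `n`. -/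
noncomputable def cylMeasure (μ : ProbabilityMeasure (ℕ → A)) {n : ℕ} (w : Fin n → A) : ℝ :=
  ((μ : Measure (ℕ → A)) {x | ∀ k : Fin n, x (k : ℕ) = w k}).toReal

/-- Entropy of the partition into cylinders of length `n`. -/
noncomputable def blockEntropy (μ : ProbabilityMeasure (ℕ → A)) (n : ℕ) : ℝ :=
  -∑ w : Fin n → A, cylMeasure μ w * Real.log (cylMeasure μ w)

/-- Kolmogorov–Sinai entropy of a shift-invariant measure. -/
noncomputable def ksEntropy (μ : ProbabilityMeasure (ℕ → A)) : ℝ :=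
  Filter.limsup (fun n => blockEntropy μ n / (n : ℝ)) Filter.atTop

/-- `μ` is ergodic for the shift. -/
def ErgodicPM (μ : ProbabilityMeasure (ℕ → A)) : Prop :=
  Ergodic shift (μ : Measure (ℕ → A))

/-- Ergodic measures are entropy dense in `M_σ(X)`. -/
def EntropyDense (X : Set (ℕ → A)) : Prop :=
  ∀ μ ∈ Msigma X, ∀ U : Set (ProbabilityMeasure (ℕ → A)), IsOpen U → μ ∈ U →
    ∀ ε : ℝ, 0 < ε →
      ∃ ν ∈ Msigma X, ν ∈ U ∧ ErgodicPM ν ∧ |ksEntropy ν - ksEntropy μ| < ε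

/-- Topological entropy of a shift space. -/
noncomputable def topEntropy (X : Set (ℕ → A)) : ℝ :=
  Filter.limsup (fun n => Real.log (Nat.card ↥(langN n X)) / (n : ℝ)) Filter.atTop

/-- The standard metric on the full shift. -/
noncomputable def rho (x y : ℕ → A) : ℝ :=
  open scoped Classical in
  if x = y then 0 else (2 : ℝ) ^ (-((sInf {j : ℕ | x j ≠ y j} : ℕ) : ℤ))

/-- Proximality of a shift space. -/
def ProximalShift (X : Set (ℕ → A)) : Prop :=
  ∀ x ∈ X, ∀ y ∈ X,
    Filter.liminf (fun n => rho (shift^[n] x) (shift^[n] y)) Filter.atTop = 0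

/-- Minimality of a shift space. -/
def MinimalShift (X : Set (ℕ → A)) : Prop :=
  ShiftSpace X ∧ ∀ Y : Set (ℕ → A), ShiftSpace Y → Y ⊆ X → Y = X

/-- An `A`-labeled directed multigraph on vertices `V` with edges `E`. -/
structure LabeledGraph (A V E : Type*) where
  src : E → V
  dst : E → V
  lab : E → A

namespace LabeledGraph

variable {A' V E : Type*}

/-- `es` is a path in `G` from `u` to `v`. -/
def PathFromTo (G : LabeledGraph A' V E) (es : List E) (u v : V) : Prop :=
  es.Chain' (fun e f => G.dst e = G.src f) ∧
  es.head?.map G.src = some u ∧ es.getLast?.map G.dst = some v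

/-- `G` is strongly connected. -/
def StronglyConnected (G : LabeledGraph A' V E) : Prop :=
  ∀ u v : V, ∃ es : List E, G.PathFromTo es u v

/-- `d` is the period of `G`: the gcd of lengths of closed paths. -/
def HasPeriod (G : LabeledGraph A' V E) (d : ℕ) : Prop :=
  (∀ (es : List E) (u : V), G.PathFromTo es u u → d ∣ es.length) ∧
  ∀ d' : ℕ, (∀ (es : List E) (u : V), G.PathFromTo es u u → d' ∣ es.length) → d' ∣ d

/-- `b` is a safe symbol for `G`. -/
def SafeSymbol (G : LabeledGraph A' V E) (b : A') : Prop :=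
  ∀ e : E, ∃ e' : E, G.src e' = G.src e ∧ G.dst e' = G.dst e ∧ G.lab e' = b

/-- The shift space presented by the labeled graph `G`: labels read along infinite paths. -/
def presents (G : LabeledGraph A' V E) : Set (ℕ → A') :=
  {x | ∃ e : ℕ → E, (∀ j, G.dst (e j) = G.src (e (j + 1))) ∧ ∀ j, x j = G.lab (e j)}

end LabeledGraph

/-- The coupling of a family of labeled graphs: an edge labeled `a` from `v` to `v'` exists
iff each `G k` has an edge from `v k` to `v' k` labeled `a`. -/
def coupling {A' : Type*} {n : ℕ} {V E : Fin n → Type*}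
    (G : ∀ k, LabeledGraph A' (V k) (E k)) :
    LabeledGraph A' (∀ k, V k) {p : (∀ k, E k) × A' // ∀ k, (G k).lab (p.1 k) = p.2} where
  src p := fun k => (G k).src (p.1.1 k)
  dst p := fun k => (G k).dst (p.1.1 k)
  lab p := p.1.2

/-- Sofic shift spaces: those presented by some finite labeled graph. -/
def Sofic (X : Set (ℕ → A)) : Prop :=
  ∃ (V E : Type) (_ : Fintype V) (_ : Fintype E) (G : LabeledGraph A V E),
    X = G.presents

/-- The coded shift generated by a finite set of words `B`: the closure of the set of all
shifts of infinite concatenations of words from `B`. -/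
def codedShift (B : Finset (List A)) : Set (ℕ → A) :=
  closure {x | ∃ (b : ℕ → List A) (k : ℕ), (∀ i, b i ∈ B) ∧ x = shift^[k] (concatSeq b)}


/-- The sets `M_k` from the definition of the Oxtoby sequence. -/
def oxtobyM (p : ℕ → ℕ) (k : ℕ) : Set ℕ :=
  if k = 0 then ∅ else
    {i | ∃ m : ℕ, -((p k : ℤ)) ≤ (i : ℤ) - m * p (k + 1) ∧ (i : ℤ) - m * p (k + 1) < p k}

/-- The Oxtoby sequence with scale `p`: its `i`-th entry is `k(i) mod 2`, where `k(i)` is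
the unique (i.e. least) `k` with `i ∈ M_k \ ⋃_{ℓ<k} M_ℓ`. -/
noncomputable def oxtoby (p : ℕ → ℕ) : ℕ → Bool := fun i =>
  decide (sInf {k : ℕ | i ∈ oxtobyM p k} % 2 = 1)

/-- The orbit closure of the Oxtoby sequence with scale `p`. -/
noncomputable def oxtobyShift (p : ℕ → ℕ) : Set (ℕ → Bool) :=
  closure {y | ∃ n : ℕ, y = shift^[n] (oxtoby p)}

section Counting

lemma card_range_div_mod_eq_le {P : ℕ} (hP : 0 < P) (r a m t : ℕ) :
    ((Finset.range (P * r * t)).filter (fun j => (m + j) / P % r = a)).card ≤ t * P := by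
  induction t generalizing m with
  | zero => simp
  | succ t ih =>
    have hper : Function.Periodic (fun i => i / P % r = a) (P * r) := fun i => by
      simp [Nat.add_mul_div_left _ _ hP]
    have hone : ((Finset.range (P * r)).filter (fun j => (m + j) / P % r = a)).card ≤ P := by
      have h1 := Nat.filter_Ico_card_eq_of_periodic m (P * r) (fun i => i / P % r = a) hper
      have h2 : ((Finset.range (P * r)).filter (fun j => (m + j) / P % r = a)).card
          = ((Finset.Ico m (m + P * r)).filter (fun i => i / P % r = a)).card := by
        refine Finset.card_bij (fun j _ => m + j) ?_ ?_ ?_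
        · intro j hj
          simp only [Finset.mem_filter, Finset.mem_range, Finset.mem_Ico] at hj ⊢
          exact ⟨by omega, hj.2⟩
        · intro j _ j' _ h
          omega
        · intro i hi
          simp only [Finset.mem_filter, Finset.mem_Ico] at hi
          refine ⟨i - m, ?_, by omega⟩
          simp only [Finset.mem_filter, Finset.mem_range]
          exact ⟨by omega, by rw [Nat.add_sub_cancel' hi.1.1]; exact hi.2⟩
      rw [h2, h1, Nat.count_eq_card_filter_range]
      calc _ ≤ (Finset.Ico (a * P) ((a + 1) * P)).card := by
            refine Finset.card_le_card fun i hi => ?_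
            simp only [Finset.mem_filter, Finset.mem_range, Finset.mem_Ico] at hi ⊢
            have hlt : i / P < r := Nat.div_lt_of_lt_mul hi.1
            have hq : i / P = a := by rw [← hi.2, Nat.mod_eq_of_lt hlt]
            exact ⟨(Nat.le_div_iff_mul_le hP).1 hq.ge, (Nat.div_lt_iff_lt_mul hP).1 (by omega)⟩
        _ = P := by simp [add_mul]
    have hsplit : (Finset.range (P * r * (t + 1))).filter (fun j => (m + j) / P % r = a)
        ⊆ (Finset.range (P * r)).filter (fun j => (m + j) / P % r = a) ∪
          ((Finset.range (P * r * t)).filter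
            (fun j => (m + P * r + j) / P % r = a)).map (addLeftEmbedding (P * r)) := by
      intro j hj
      simp only [Finset.mem_union, Finset.mem_filter, Finset.mem_range, Finset.mem_map,
        addLeftEmbedding_apply] at hj ⊢
      rcases lt_or_ge j (P * r) with h | h
      · exact Or.inl ⟨h, hj.2⟩
      · refine Or.inr ⟨j - P * r, ⟨?_, ?_⟩, by omega⟩
        · have := hj.1
          rw [mul_add, mul_one] at this
          omega
        · rw [show m + P * r + (j - P * r) = m + j by omega]
          exact hj.2
    calc _ ≤ _ := Finset.card_le_card hsplit
      _ ≤ _ := Finset.card_union_le _ _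
      _ ≤ P + t * P := by
        rw [Finset.card_map]
        exact add_le_add hone (ih _)
      _ = (t + 1) * P := by ring

end Counting

section Oxtoby

variable {p : ℕ → ℕ}

lemma oxtobyM_zero : oxtobyM p 0 = ∅ := if_pos rfl

lemma mem_oxtobyM_iff {k r : ℕ} (hk : k ≠ 0) (hP : 0 < p k) (hr : 2 ≤ r)
    (hpr : p (k + 1) = p k * r) (i : ℕ) :
    i ∈ oxtobyM p k ↔ i / p k % r = 0 ∨ i / p k % r = r - 1 := by
  simp only [oxtobyM, if_neg hk, Set.mem_ofPred_eq, hpr]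
  generalize p k = P at *
  have hi : P * (i / P) + i % P = i := Nat.div_add_mod i P
  have hc : i % P < P := Nat.mod_lt _ hP
  generalize i / P = b at *
  generalize i % P = c at *
  subst hi
  have hb : r * (b / r) + b % r = b := Nat.div_add_mod b r
  have hbr : b % r < r := Nat.mod_lt _ (by omega)
  push_cast
  constructor
  · rintro ⟨m, h1, h2⟩
    have hc' : (c : ℤ) < P := by exact_mod_cast hc
    have h3 : (-2 : ℤ) < b - m * r := by
      by_contra! h
      nlinarith
    have h4 : (b - m * r : ℤ) < 1 := by
      by_contra! h
      nlinarith
    rcases (by omega : (b : ℤ) = m * r ∨ (b : ℤ) + 1 = m * r) with h | h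
    · left
      have : b = m * r := by exact_mod_cast h
      simp [this]
    · right
      have h5 : b + 1 = m * r := by exact_mod_cast h
      obtain ⟨m, rfl⟩ : ∃ m', m = m' + 1 :=
        ⟨m - 1, by rcases m with _ | m <;> simp at h5 ⊢⟩
      have h6 : b = r - 1 + r * m := by
        rw [add_mul, one_mul, mul_comm m r] at h5
        omega
      rw [h6, Nat.add_mul_mod_self_left, Nat.mod_eq_of_lt (by omega)]
  · generalize b / r = q at *
    rintro (h | h)
    · have hbq : (b : ℤ) = r * q := by exact_mod_cast (show b = r * q by omega)
      refine ⟨q, ?_⟩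
      rw [show (P : ℤ) * b + c - q * (P * r) = c by rw [hbq]; ring]
      omega
    · have hbq : (b : ℤ) = r * (q + 1) - 1 := by
        have : b + 1 = r * (q + 1) := by rw [mul_add]; omega
        have : (b : ℤ) + 1 = r * (q + 1) := by exact_mod_cast this
        omega
      refine ⟨q + 1, ?_⟩
      push_cast
      rw [show (P : ℤ) * b + c - (q + 1) * (P * r) = c - P by rw [hbq]; ring]
      omega

lemma scale_dvd_of_le (hdvd : ∀ k, p k ∣ p (k + 1)) {K k : ℕ} (h : K ≤ k) : p K ∣ p k := by
  induction h with
  | refl => exact dvd_rfl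
  | step _ ih => exact ih.trans (hdvd _)

lemma exists_ratio (hpos : ∀ k, 0 < p k) (hdvd : ∀ k, p k ∣ p (k + 1))
    (hratio : ∀ k, 3 * p k ≤ p (k + 1)) (k : ℕ) : ∃ r, 3 ≤ r ∧ p (k + 1) = p k * r := by
  obtain ⟨r, hr⟩ := hdvd k
  refine ⟨r, ?_, hr⟩
  have := hratio k
  rw [hr, mul_comm] at this
  exact Nat.le_of_mul_le_mul_left this (hpos k)

/-- Whether `i` lies in `oxtobyM p k` only depends on `i / p K` when `K ≤ k`. -/
lemma mem_oxtobyM_congr (hpos : ∀ k, 0 < p k) (hdvd : ∀ k, p k ∣ p (k + 1))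
    (hratio : ∀ k, 3 * p k ≤ p (k + 1)) {K k i j : ℕ} (h : K ≤ k) (hij : i / p K = j / p K) :
    i ∈ oxtobyM p k ↔ j ∈ oxtobyM p k := by
  rcases eq_or_ne k 0 with rfl | hk
  · simp [oxtobyM_zero]
  obtain ⟨r, hr, hpr⟩ := exists_ratio hpos hdvd hratio k
  obtain ⟨d, hd⟩ := scale_dvd_of_le hdvd h
  rw [mem_oxtobyM_iff hk (hpos k) (by omega) hpr, mem_oxtobyM_iff hk (hpos k) (by omega) hpr, hd,
    ← Nat.div_div_eq_div_mul, ← Nat.div_div_eq_div_mul, hij]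

lemma mem_oxtobyM_of_lt {k i : ℕ} (hk : k ≠ 0) (h : i < p k) : i ∈ oxtobyM p k := by
  simp only [oxtobyM, if_neg hk, Set.mem_ofPred_eq]
  exact ⟨0, by omega, by omega⟩

/-- The positions lying in one of the sets `M_1, …, M_L`. -/
def IsLow (p : ℕ → ℕ) (L i : ℕ) : Prop := ∃ l < L, i ∈ oxtobyM p (l + 1)

lemma notMem_oxtobyM_of_not_isLow {L i k : ℕ} (h : ¬ IsLow p L i) (hk : k < L + 1) :
    i ∉ oxtobyM p k := by
  rcases k with _ | k
  · simp [oxtobyM_zero]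
  · exact fun hi => h ⟨k, by omega, hi⟩

lemma oxtoby_eq_of_mem {L i : ℕ} (h : ¬ IsLow p L i) (hi : i ∈ oxtobyM p (L + 1)) :
    oxtoby p i = decide ((L + 1) % 2 = 1) := by
  have : sInf {k : ℕ | i ∈ oxtobyM p k} = L + 1 := by
    refine le_antisymm (Nat.sInf_le (by simpa using hi)) ?_
    by_contra! hlt
    exact notMem_oxtobyM_of_not_isLow h hlt (Nat.sInf_mem (s := {k | i ∈ oxtobyM p k}) ⟨L + 1, by simpa using hi⟩)
  rw [oxtoby, this]

lemma oxtoby_congr {L i j : ℕ} (hi : ¬ IsLow p L i) (hj : ¬ IsLow p L j)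
    (h : ∀ k, L + 1 ≤ k → (i ∈ oxtobyM p k ↔ j ∈ oxtobyM p k)) :
    oxtoby p i = oxtoby p j := by
  have : {k : ℕ | i ∈ oxtobyM p k} = {k : ℕ | j ∈ oxtobyM p k} := by
    ext k
    rcases lt_or_ge k (L + 1) with hk | hk
    · simp [notMem_oxtobyM_of_not_isLow hi hk, notMem_oxtobyM_of_not_isLow hj hk]
    · exact h k hk
  simp only [oxtoby, this]

open scoped Classical in
lemma card_isLow_le (hpos : ∀ k, 0 < p k) (hdvd : ∀ k, p k ∣ p (k + 1))
    (hratio : ∀ k, 3 * p k ≤ p (k + 1)) (L m : ℕ) {N : ℕ} (hN : p (L + 1) ∣ N) :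
    (((Finset.range N).filter (fun j => IsLow p L (m + j))).card : ℝ)
      ≤ N * ∑ k ∈ Finset.range L, (2 * p (k + 1) : ℝ) / (p (k + 2) : ℝ) := by
  have hsub : (Finset.range N).filter (fun j => IsLow p L (m + j)) ⊆
      (Finset.range L).biUnion
        (fun l => (Finset.range N).filter (fun j => m + j ∈ oxtobyM p (l + 1))) := by
    intro j hj
    simp only [Finset.mem_filter, Finset.mem_biUnion, Finset.mem_range] at hj ⊢
    obtain ⟨hjN, l, hl, h⟩ := hj
    exact ⟨l, hl, hjN, h⟩
  have hcard := (Finset.card_le_card hsub).trans Finset.card_biUnion_le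
  rw [Finset.mul_sum]
  refine (Nat.cast_le.2 hcard).trans ?_
  rw [Nat.cast_sum]
  refine Finset.sum_le_sum fun l hl => ?_
  rw [Finset.mem_range] at hl
  obtain ⟨r, hr, hpr⟩ := exists_ratio hpos hdvd hratio (l + 1)
  obtain ⟨t, ht⟩ := (scale_dvd_of_le hdvd (show l + 1 + 1 ≤ L + 1 by omega)).trans hN
  have h1 : ((Finset.range N).filter (fun j => m + j ∈ oxtobyM p (l + 1))).card
      ≤ t * p (l + 1) + t * p (l + 1) := by
    rw [ht, hpr]
    refine le_trans ?_ (add_le_add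
      (card_range_div_mod_eq_le (hpos (l + 1)) r 0 m t)
      (card_range_div_mod_eq_le (hpos (l + 1)) r (r - 1) m t))
    refine le_trans (Finset.card_le_card ?_) (Finset.card_union_le _ _)
    rw [← Finset.filter_or]
    refine Finset.monotone_filter_right _ fun j _ hj => ?_
    exact (mem_oxtobyM_iff (by omega) (hpos _) (by omega) hpr _).1 hj
  have h2 : (p (l + 2) : ℝ) ≠ 0 := by exact_mod_cast (hpos _).ne'
  calc _ ≤ ((t * p (l + 1) + t * p (l + 1) : ℕ) : ℝ) := Nat.cast_le.2 h1
    _ = N * (2 * p (l + 1) / p (l + 2)) := by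
      rw [ht]
      push_cast
      field_simp
      ring

open scoped Classical in
/-- Windows of length `p (L + 1)` whose two blocks have the same level are almost constant. -/
lemma exists_card_oxtoby_ne_le (hpos : ∀ k, 0 < p k) (hdvd : ∀ k, p k ∣ p (k + 1))
    (hratio : ∀ k, 3 * p k ≤ p (k + 1)) {L r : ℕ} (hr : 3 ≤ r)
    (hpr : p (L + 2) = p (L + 1) * r) {m : ℕ} (h0 : m / p (L + 1) % r ≠ 0)
    (h2 : m / p (L + 1) % r ≠ r - 2) :
    ∃ c : Bool, ((Finset.range (p (L + 1))).filter (fun j => oxtoby p (m + j) ≠ c)).card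
      ≤ ((Finset.range (p (L + 1))).filter (fun j => IsLow p L (m + j))).card := by
  suffices h : ∃ c : Bool, ∀ j < p (L + 1), ¬ IsLow p L (m + j) → oxtoby p (m + j) = c by
    obtain ⟨c, hc⟩ := h
    refine ⟨c, Finset.card_le_card fun j hj => ?_⟩
    simp only [Finset.mem_filter, Finset.mem_range] at hj ⊢
    exact ⟨hj.1, by_contra fun hlow => hj.2 (hc j hj.1 hlow)⟩
  have hP := hpos (L + 1)
  have hmem := mem_oxtobyM_iff (p := p) (k := L + 1) (by omega) hP (by omega) hpr
  have hblock : ∀ j < p (L + 1), (m + j) / p (L + 1) = m / p (L + 1) ∨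
      (m + j) / p (L + 1) = m / p (L + 1) + 1 := by
    intro j hj
    have h1 : m / p (L + 1) ≤ (m + j) / p (L + 1) := Nat.div_le_div_right (by omega)
    have h3 : (m + j) / p (L + 1) ≤ (m + p (L + 1)) / p (L + 1) := Nat.div_le_div_right (by omega)
    rw [Nat.add_div_right _ hP] at h3
    omega
  have hlt : m / p (L + 1) % r < r := Nat.mod_lt _ (by omega)
  have hdm := Nat.div_add_mod (m / p (L + 1)) r
  by_cases hlast : m / p (L + 1) % r = r - 1
  · refine ⟨_, fun j hj hlow => oxtoby_eq_of_mem hlow ((hmem _).2 ?_)⟩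
    rcases hblock j hj with h | h <;> rw [h]
    · exact Or.inr hlast
    · left
      rw [Nat.add_mod, hlast, Nat.mod_eq_of_lt (show 1 < r by omega),
        show r - 1 + 1 = r by omega, Nat.mod_self]
  · have hquot : ∀ j < p (L + 1), (m + j) / p (L + 2) = m / p (L + 1) / r ∧
        m + j ∉ oxtobyM p (L + 1) := by
      intro j hj
      rw [hmem, hpr, ← Nat.div_div_eq_div_mul]
      rcases hblock j hj with h | h <;> rw [h]
      · exact ⟨rfl, by omega⟩
      · generalize m / p (L + 1) = b at *
        have hb : b + 1 = b % r + 1 + r * (b / r) := by omega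
        constructor
        · rw [hb, Nat.add_mul_div_left _ _ (by omega), Nat.div_eq_of_lt (by omega), zero_add]
        · rw [hb, Nat.add_mul_mod_self_left, Nat.mod_eq_of_lt (by omega)]
          omega
    by_cases hex : ∃ j < p (L + 1), ¬ IsLow p L (m + j)
    · obtain ⟨i, hi, hilow⟩ := hex
      refine ⟨oxtoby p (m + i), fun j hj hjlow => oxtoby_congr hjlow hilow fun k hk => ?_⟩
      rcases hk.eq_or_lt with rfl | hk
      · simp [(hquot j hj).2, (hquot i hi).2]
      · exact mem_oxtobyM_congr hpos hdvd hratio (show L + 2 ≤ k from hk)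
          ((hquot j hj).1.trans (hquot i hi).1.symm)
    · push Not at hex
      exact ⟨true, fun j hj hjlow => absurd (hex j hj) hjlow⟩

/-- The number of positions among the first `n` at which `y` differs from the symbol `c`. -/
def missCount (n : ℕ) (y : ℕ → Bool) (c : Bool) : ℕ :=
  ((Finset.range n).filter (fun j => y j ≠ c)).card

/-- A most frequent symbol among the first `n` entries of `y`. -/
def majority (n : ℕ) (y : ℕ → Bool) : Bool :=
  decide (missCount n y true ≤ missCount n y false)

lemma missCount_le (n : ℕ) (y : ℕ → Bool) (c : Bool) : missCount n y c ≤ n :=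
  (Finset.card_filter_le _ _).trans (Finset.card_range n).le

lemma missCount_majority_le (n : ℕ) (y : ℕ → Bool) (c : Bool) :
    missCount n y (majority n y) ≤ missCount n y c := by
  unfold majority
  by_cases h : missCount n y true ≤ missCount n y false <;> cases c <;> simp [h]; omega

lemma missCount_congr {n : ℕ} {y z : ℕ → Bool} (h : ∀ j < n, y j = z j) (c : Bool) :
    missCount n y c = missCount n z c := by
  unfold missCount
  congr 1
  refine Finset.filter_congr fun j hj => ?_
  rw [h j (Finset.mem_range.1 hj)]

lemma majority_congr {n : ℕ} {y z : ℕ → Bool} (h : ∀ j < n, y j = z j) :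
    majority n y = majority n z := by
  simp only [majority, missCount_congr h]

lemma shift_iterate_apply {B : Type} (n : ℕ) (x : ℕ → B) (j : ℕ) :
    (shift^[n] x) j = x (n + j) := by
  induction n generalizing x with
  | zero => simp
  | succ n ih =>
    rw [Function.iterate_succ_apply, ih, shift]
    congr 1
    omega

lemma sum_missCount_oxtoby_le (hpos : ∀ k, 0 < p k) (hdvd : ∀ k, p k ∣ p (k + 1))
    (hratio : ∀ k, 3 * p k ≤ p (k + 1)) (L m : ℕ) :
    ∑ j ∈ Finset.range (p (L + 2)), (missCount (p (L + 1)) (shift^[m + j] (oxtoby p))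
        (majority (p (L + 1)) (shift^[m + j] (oxtoby p))) : ℝ)
      ≤ p (L + 2) * p (L + 1) *
        ∑ k ∈ Finset.range (L + 1), (2 * p (k + 1) : ℝ) / (p (k + 2) : ℝ) := by
  classical
  obtain ⟨r, hr, hpr⟩ := exists_ratio hpos hdvd hratio (L + 1)
  set P := p (L + 1) with hPdef
  set s := ∑ k ∈ Finset.range L, (2 * p (k + 1) : ℝ) / (p (k + 2) : ℝ) with hs
  have hs0 : 0 ≤ s := Finset.sum_nonneg fun k _ => by positivity
  have hPpos : 0 < P := hpos _
  have hbad : ((Finset.range (p (L + 2))).filter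
      (fun j => (m + j) / P % r = 0 ∨ (m + j) / P % r = r - 2)).card ≤ 2 * P := by
    rw [Finset.filter_or, hpr]
    refine (Finset.card_union_le _ _).trans ?_
    have h0 := card_range_div_mod_eq_le hPpos r 0 m 1
    have h2 := card_range_div_mod_eq_le hPpos r (r - 2) m 1
    simp only [mul_one, one_mul] at h0 h2
    omega
  have hterm : ∀ j, (missCount P (shift^[m + j] (oxtoby p))
        (majority P (shift^[m + j] (oxtoby p))) : ℝ)
      ≤ P * s + P * (if (m + j) / P % r = 0 ∨ (m + j) / P % r = r - 2 then 1 else 0) := by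
    intro j
    split_ifs with h
    · have : (missCount P (shift^[m + j] (oxtoby p))
        (majority P (shift^[m + j] (oxtoby p))) : ℝ) ≤ P := Nat.cast_le.2 (missCount_le _ _ _)
      nlinarith [mul_nonneg (Nat.cast_nonneg (α := ℝ) P) hs0]
    · push Not at h
      obtain ⟨c, hc⟩ := exists_card_oxtoby_ne_le hpos hdvd hratio hr hpr h.1 h.2
      have h1 : missCount P (shift^[m + j] (oxtoby p)) c ≤
          ((Finset.range P).filter (fun i => IsLow p L (m + j + i))).card := by
        simpa only [missCount, shift_iterate_apply] using hc
      have h2 := card_isLow_le hpos hdvd hratio L (m + j) (dvd_refl (p (L + 1)))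
      rw [mul_zero, add_zero]
      exact (Nat.cast_le.2 ((missCount_majority_le _ _ c).trans h1)).trans h2
  have hQ : (p (L + 2) : ℝ) ≠ 0 := by exact_mod_cast (hpos _).ne'
  calc _ ≤ ∑ j ∈ Finset.range (p (L + 2)),
        ((P * s + P * (if (m + j) / P % r = 0 ∨ (m + j) / P % r = r - 2 then 1 else 0) : ℝ)) :=
        Finset.sum_le_sum fun j _ => hterm j
    _ = p (L + 2) * (P * s) + P * (((Finset.range (p (L + 2))).filter
      (fun j => (m + j) / P % r = 0 ∨ (m + j) / P % r = r - 2)).card : ℝ) := by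
        rw [Finset.sum_add_distrib, ← Finset.mul_sum, ← Finset.mul_sum, Finset.sum_boole, Finset.sum_const,
          Finset.card_range, nsmul_eq_mul]
        ring
    _ ≤ p (L + 2) * (P * s) + P * ((2 * P : ℕ) : ℝ) := by
        gcongr
    _ = _ := by
        rw [Finset.sum_range_succ, ← hs, ← hPdef]
        push_cast
        field_simp

/-- Every finite initial word of a point of the orbit closure occurs in the Oxtoby sequence. -/
lemma exists_eq_shift_oxtoby {y : ℕ → Bool} (hy : y ∈ oxtobyShift p) (N : ℕ) :
    ∃ m, ∀ j < N, y j = oxtoby p (m + j) := by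
  have hopen : IsOpen {z : ℕ → Bool | ∀ j < N, z j = y j} := by
    have : {z : ℕ → Bool | ∀ j < N, z j = y j}
        = ⋂ j ∈ Finset.range N, (fun z : ℕ → Bool => z j) ⁻¹' {y j} := by
      ext z
      simp
    rw [this]
    exact isOpen_biInter_finset fun j _ => (isOpen_discrete _).preimage (continuous_apply j)
  obtain ⟨z, hz, m, rfl⟩ := mem_closure_iff.1 hy _ hopen (fun _ _ => rfl)
  exact ⟨m, fun j hj => by rw [← hz j hj, shift_iterate_apply]⟩

lemma sum_missCount_le (hpos : ∀ k, 0 < p k) (hdvd : ∀ k, p k ∣ p (k + 1))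
    (hratio : ∀ k, 3 * p k ≤ p (k + 1)) (L : ℕ) {y : ℕ → Bool} (hy : y ∈ oxtobyShift p) :
    ∑ j ∈ Finset.range (p (L + 2)), (missCount (p (L + 1)) (shift^[j] y)
        (majority (p (L + 1)) (shift^[j] y)) : ℝ)
      ≤ p (L + 2) * p (L + 1) *
        ∑ k ∈ Finset.range (L + 1), (2 * p (k + 1) : ℝ) / (p (k + 2) : ℝ) := by
  obtain ⟨m, hm⟩ := exists_eq_shift_oxtoby hy (p (L + 2) + p (L + 1))
  refine le_trans (le_of_eq (Finset.sum_congr rfl fun j hj => ?_))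
    (sum_missCount_oxtoby_le hpos hdvd hratio L m)
  rw [Finset.mem_range] at hj
  have h : ∀ i < p (L + 1), (shift^[j] y) i = (shift^[m + j] (oxtoby p)) i := by
    intro i hi
    rw [shift_iterate_apply, shift_iterate_apply, hm _ (by omega), add_assoc]
  rw [majority_congr h, missCount_congr h]

/-- Along the scale, the Oxtoby sequence is mostly constant on its initial windows. -/
lemma missCount_oxtoby_le (hpos : ∀ k, 0 < p k) (hdvd : ∀ k, p k ∣ p (k + 1))
    (hratio : ∀ k, 3 * p k ≤ p (k + 1)) (L : ℕ) :
    (missCount (p (L + 1)) (oxtoby p) (decide ((L + 1) % 2 = 1)) : ℝ)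
      ≤ p (L + 1) * ∑ k ∈ Finset.range L, (2 * p (k + 1) : ℝ) / (p (k + 2) : ℝ) := by
  classical
  refine le_trans (Nat.cast_le.2 (Finset.card_le_card fun j hj => ?_))
    (card_isLow_le hpos hdvd hratio L 0 (dvd_refl (p (L + 1))))
  simp only [Finset.mem_filter, Finset.mem_range, zero_add] at hj ⊢
  exact ⟨hj.1, by_contra fun hlow =>
    hj.2 (oxtoby_eq_of_mem hlow (mem_oxtobyM_of_lt (by omega) hj.1))⟩

end Oxtoby

section Dbar

lemma missCount_add_missCount_not (n : ℕ) (y : ℕ → Bool) (c : Bool) :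
    missCount n y c + missCount n y (!c) = n := by
  have h := Finset.card_filter_add_card_filter_not (s := Finset.range n) (fun j => y j ≠ c)
  rw [Finset.card_range] at h
  have h2 : missCount n y (!c) = ((Finset.range n).filter (fun j => ¬ y j ≠ c)).card := by
    unfold missCount
    congr 1
    refine Finset.filter_congr fun j _ => ?_
    cases y j <;> cases c <;> simp
  rw [h2]
  exact h

lemma missCount_div_le_one (n : ℕ) (y : ℕ → Bool) (c : Bool) : (missCount n y c : ℝ) / n ≤ 1 :=
  div_le_one_of_le₀ (Nat.cast_le.2 (missCount_le n y c)) (Nat.cast_nonneg n)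

lemma dbar_const_eq (y : ℕ → Bool) (c : Bool) :
    dbar y (fun _ => c) = limsup (fun n => (missCount n y c : ℝ) / n) atTop := rfl

lemma isBoundedUnder_missCount (y : ℕ → Bool) (c : Bool) :
    IsBoundedUnder (· ≤ ·) atTop (fun n => (missCount n y c : ℝ) / n) :=
  isBoundedUnder_of ⟨1, fun n => missCount_div_le_one n y c⟩

lemma dbar_const_le_one (y : ℕ → Bool) (c : Bool) : dbar y (fun _ => c) ≤ 1 := by
  rw [dbar_const_eq]
  refine limsup_le_of_le ?_ (Eventually.of_forall fun n => missCount_div_le_one n y c)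
  exact IsCoboundedUnder.of_frequently_ge (a := 0) (Frequently.of_forall fun n => by positivity)

lemma lt_scale {p : ℕ → ℕ} (hpos : ∀ k, 0 < p k) (hratio : ∀ k, 3 * p k ≤ p (k + 1)) (k : ℕ) :
    k < p k := by
  induction k with
  | zero => exact hpos 0
  | succ k ih =>
    have := hratio k
    omega

lemma one_sub_le_dbar_oxtoby {p : ℕ → ℕ} (hpos : ∀ k, 0 < p k) (hdvd : ∀ k, p k ∣ p (k + 1))
    (hratio : ∀ k, 3 * p k ≤ p (k + 1)) {s : ℝ}
    (hs : ∀ L, ∑ k ∈ Finset.range L, (2 * p (k + 1) : ℝ) / (p (k + 2) : ℝ) ≤ s) (c : Bool) :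
    1 - s ≤ dbar (oxtoby p) (fun _ => c) := by
  rw [dbar_const_eq]
  refine le_limsup_of_frequently_le ?_ (isBoundedUnder_missCount _ _)
  rw [frequently_atTop]
  intro N
  obtain ⟨L, hL, hc⟩ : ∃ L, N ≤ L ∧ decide ((L + 1) % 2 = 1) = !c := by
    cases c
    · exact ⟨2 * N, by omega, by simp⟩
    · exact ⟨2 * N + 1, by omega, by simp; omega⟩
  refine ⟨p (L + 1), by have := lt_scale hpos hratio (L + 1); omega, ?_⟩
  have h1 := missCount_oxtoby_le hpos hdvd hratio L
  rw [hc] at h1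
  have h2 : (missCount (p (L + 1)) (oxtoby p) c : ℝ) + missCount (p (L + 1)) (oxtoby p) (!c)
      = p (L + 1) := by
    exact_mod_cast missCount_add_missCount_not (p (L + 1)) (oxtoby p) c
  have hp : (0 : ℝ) < p (L + 1) := by exact_mod_cast hpos (L + 1)
  rw [le_div_iff₀ hp]
  nlinarith [hs L]

lemma oxtoby_mem_oxtobyShift (p : ℕ → ℕ) : oxtoby p ∈ oxtobyShift p :=
  subset_closure ⟨0, rfl⟩

lemma shift_iterate_mem_oxtobyShift (p : ℕ → ℕ) (n : ℕ) : shift^[n] (oxtoby p) ∈ oxtobyShift p :=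
  subset_closure ⟨n, rfl⟩

lemma lt_hausdist_dbar_oxtobyShift {p : ℕ → ℕ} (hpos : ∀ k, 0 < p k)
    (hdvd : ∀ k, p k ∣ p (k + 1)) (hratio : ∀ k, 3 * p k ≤ p (k + 1)) {s δ : ℝ} (hsδ : s < δ)
    (hs : ∀ L, ∑ k ∈ Finset.range L, (2 * p (k + 1) : ℝ) / (p (k + 2) : ℝ) ≤ s) :
    1 - δ < hausdist dbar (oxtobyShift p)
        ({fun _ => false, fun _ => true} : Set (ℕ → Bool)) := by
  have hnonneg : ∀ (y : ℕ → Bool) (c : Bool), 0 ≤ dbar y (fun _ => c) := fun y c => by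
    rw [dbar_const_eq]
    exact le_limsup_of_frequently_le (Frequently.of_forall fun n => by positivity)
      (isBoundedUnder_missCount _ _)
  have hbdd : ∀ y : ℕ → Bool, BddBelow (Set.range
      fun q : ({fun _ => false, fun _ => true} : Set (ℕ → Bool)) => dbar y q) := by
    refine fun y => ⟨0, ?_⟩
    rintro _ ⟨⟨q, rfl | rfl⟩, rfl⟩ <;> exact hnonneg _ _
  have : Nonempty ({fun _ => false, fun _ => true} : Set (ℕ → Bool)) :=
    ⟨⟨fun _ => false, Or.inl rfl⟩⟩
  refine lt_of_lt_of_le ?_ (le_max_left _ _)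
  refine lt_of_lt_of_le (b := 1 - s) (by linarith) ?_
  refine le_trans ?_ (le_ciSup (f := fun y : oxtobyShift p =>
    ⨅ q : ({fun _ => false, fun _ => true} : Set (ℕ → Bool)), dbar (y : ℕ → Bool) q) ?_
    ⟨oxtoby p, oxtoby_mem_oxtobyShift p⟩)
  · refine le_ciInf ?_
    rintro ⟨q, rfl | rfl⟩ <;> exact one_sub_le_dbar_oxtoby hpos hdvd hratio hs _
  · refine ⟨1, ?_⟩
    rintro _ ⟨y, rfl⟩
    exact (ciInf_le (hbdd y) ⟨fun _ => false, Or.inl rfl⟩).trans (dbar_const_le_one _ _)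

end Dbar

section OrbitAverage

variable {Z : Type*} [TopologicalSpace Z] [MeasurableSpace Z] [BorelSpace Z] {T : Z → Z}

/-- The average of the first `n` images of `μ` under the continuous map `T`. -/
noncomputable def orbitAverage (hT : Continuous T) (μ : ProbabilityMeasure Z) {n : ℕ}
    (hn : 0 < n) : ProbabilityMeasure Z :=
  ⟨(n : ENNReal)⁻¹ • ∑ j ∈ Finset.range n, (μ : Measure Z).map T^[j], ⟨by
    have h : ∀ j, (μ : Measure Z).map T^[j] Set.univ = 1 := fun j => by
      rw [Measure.map_apply (hT.iterate j).measurable MeasurableSet.univ, Set.preimage_univ,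
        measure_univ]
    simp only [Measure.smul_apply, Measure.finsetSum_apply, h, Finset.sum_const,
      Finset.card_range, nsmul_eq_mul, mul_one, smul_eq_mul]
    exact ENNReal.inv_mul_cancel (by exact_mod_cast hn.ne') (ENNReal.natCast_ne_top n)⟩⟩

lemma orbitAverage_apply (hT : Continuous T) (μ : ProbabilityMeasure Z) {n : ℕ} (hn : 0 < n)
    {E : Set Z} (hE : MeasurableSet E) :
    (orbitAverage hT μ hn : Measure Z) E
      = (n : ENNReal)⁻¹ * ∑ j ∈ Finset.range n, (μ : Measure Z) (T^[j] ⁻¹' E) := by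
  simp only [orbitAverage, ProbabilityMeasure.coe_mk, Measure.smul_apply,
    Measure.finsetSum_apply, smul_eq_mul]
  congr 1
  exact Finset.sum_congr rfl fun j _ => Measure.map_apply (hT.iterate j).measurable hE

lemma orbitAverage_real (hT : Continuous T) (μ : ProbabilityMeasure Z) {n : ℕ} (hn : 0 < n)
    {E : Set Z} (hE : MeasurableSet E) :
    (orbitAverage hT μ hn : Measure Z).real E
      = (n : ℝ)⁻¹ * ∑ j ∈ Finset.range n, (μ : Measure Z).real (T^[j] ⁻¹' E) := by
  rw [measureReal_def, orbitAverage_apply hT μ hn hE, ENNReal.toReal_mul,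
    ENNReal.toReal_sum fun j _ => measure_ne_top _ _]
  simp [measureReal_def]

lemma orbitAverage_apply_eq (hT : Continuous T) (μ : ProbabilityMeasure Z) {n : ℕ} (hn : 0 < n)
    {E : Set Z} (hE : MeasurableSet E) {c : ENNReal}
    (h : ∀ j, (μ : Measure Z) (T^[j] ⁻¹' E) = c) :
    (orbitAverage hT μ hn : Measure Z) E = c := by
  rw [orbitAverage_apply hT μ hn hE]
  simp only [h, Finset.sum_const, Finset.card_range, nsmul_eq_mul]
  rw [← mul_assoc, ENNReal.inv_mul_cancel (by exact_mod_cast hn.ne') (ENNReal.natCast_ne_top n),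
    one_mul]

lemma integral_orbitAverage (hT : Continuous T) (μ : ProbabilityMeasure Z) {n : ℕ} (hn : 0 < n)
    (f : BoundedContinuousFunction Z ℝ) :
    ∫ z, f z ∂(orbitAverage hT μ hn : Measure Z)
      = (n : ℝ)⁻¹ * ∑ j ∈ Finset.range n, ∫ z, f (T^[j] z) ∂(μ : Measure Z) := by
  have hprob : ∀ j, IsProbabilityMeasure ((μ : Measure Z).map T^[j]) := fun j =>
    Measure.isProbabilityMeasure_map (hT.iterate j).measurable.aemeasurable
  simp only [orbitAverage, ProbabilityMeasure.coe_mk]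
  rw [integral_smul_measure, integral_finsetSum_measure fun j _ => f.integrable _]
  simp only [ENNReal.toReal_inv, ENNReal.toReal_natCast, smul_eq_mul]
  congr 1
  exact Finset.sum_congr rfl fun j _ =>
    integral_map (hT.iterate j).measurable.aemeasurable f.continuous.aestronglyMeasurable

lemma abs_integral_orbitAverage_sub_le (hT : Continuous T) (μ : ProbabilityMeasure Z) {n : ℕ}
    (hn : 0 < n) (f : BoundedContinuousFunction Z ℝ) :
    |∫ z, f (T z) ∂(orbitAverage hT μ hn : Measure Z)
      - ∫ z, f z ∂(orbitAverage hT μ hn : Measure Z)| ≤ (n : ℝ)⁻¹ * (2 * ‖f‖) := by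
  have h := integral_orbitAverage hT μ hn (f.compContinuous ⟨T, hT⟩)
  simp only [BoundedContinuousFunction.compContinuous_apply, ContinuousMap.coe_mk,
    ← Function.iterate_succ_apply' T] at h
  rw [h, integral_orbitAverage hT μ hn f, ← mul_sub, ← Finset.sum_sub_distrib,
    Finset.sum_range_sub (fun j => ∫ z, f (T^[j] z) ∂(μ : Measure Z)), abs_mul,
    abs_of_nonneg (by positivity : (0 : ℝ) ≤ (n : ℝ)⁻¹)]
  have hb : ∀ j, |∫ z, f (T^[j] z) ∂(μ : Measure Z)| ≤ ‖f‖ := fun j => by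
    have := norm_integral_le_of_norm_le_const (μ := (μ : Measure Z)) (f := fun z => f (T^[j] z))
      (C := ‖f‖) (Eventually.of_forall fun z => f.norm_coe_le_norm _)
    simpa using this
  gcongr
  calc _ ≤ _ := abs_sub _ _
    _ ≤ ‖f‖ + ‖f‖ := add_le_add (hb n) (hb 0)
    _ = 2 * ‖f‖ := by ring

/-- Orbit averages along windows of growing length accumulate at an invariant measure. -/
lemma exists_tendsto_orbitAverage [CompactSpace Z] [TopologicalSpace.MetrizableSpace Z]
    (hT : Continuous T) (μ : ℕ → ProbabilityMeasure Z) {n : ℕ → ℕ} (hn : ∀ k, 0 < n k)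
    (hlim : Tendsto n atTop atTop) :
    ∃ (U : Ultrafilter ℕ) (ξ : ProbabilityMeasure Z),
      Tendsto (fun k => orbitAverage hT (μ k) (hn k)) U (𝓝 ξ) ∧
      (ξ : Measure Z).map T = ξ := by
  have hU : (↑(hyperfilter ℕ) : Filter ℕ) ≤ atTop := Nat.hyperfilter_le_atTop
  obtain ⟨ξ, -, hξ⟩ := isCompact_univ.ultrafilter_le_nhds
    ((hyperfilter ℕ).map fun k => orbitAverage hT (μ k) (hn k)) (by simp)
  have hξ' : Tendsto (fun k => orbitAverage hT (μ k) (hn k)) (hyperfilter ℕ) (𝓝 ξ) := hξ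
  refine ⟨hyperfilter ℕ, ξ, hξ', ?_⟩
  have hmap := ProbabilityMeasure.tendsto_map_of_tendsto_of_continuous _ _ hξ' hT
  have hsame : Tendsto (fun k => (orbitAverage hT (μ k) (hn k)).map hT.measurable.aemeasurable)
      (hyperfilter ℕ) (𝓝 ξ) := by
    rw [ProbabilityMeasure.tendsto_iff_forall_integral_tendsto] at hξ' ⊢
    intro f
    have hdiff : Tendsto (fun k => ∫ z, f (T z) ∂(orbitAverage hT (μ k) (hn k) : Measure Z)
        - ∫ z, f z ∂(orbitAverage hT (μ k) (hn k) : Measure Z)) (hyperfilter ℕ) (𝓝 0) := by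
      refine squeeze_zero_norm (fun k => abs_integral_orbitAverage_sub_le hT (μ k) (hn k) f) ?_
      have h := ((tendsto_inv_atTop_zero (𝕜 := ℝ)).comp
        ((tendsto_natCast_atTop_atTop (R := ℝ)).comp hlim)).mul_const (2 * ‖f‖)
      rw [zero_mul] at h
      exact h.mono_left hU
    have h := hdiff.add (hξ' f)
    rw [zero_add] at h
    refine h.congr fun k => ?_
    rw [sub_add_cancel, ProbabilityMeasure.toMeasure_map,
      integral_map hT.measurable.aemeasurable f.continuous.aestronglyMeasurable]
  have := congrArg (fun ν : ProbabilityMeasure Z => (ν : Measure Z))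
    (tendsto_nhds_unique hmap hsame)
  simpa using this

lemma apply_eq_one_of_tendsto [HasOuterApproxClosed Z] {U : Ultrafilter ℕ}
    {μ : ℕ → ProbabilityMeasure Z} {ξ : ProbabilityMeasure Z} (h : Tendsto μ U (𝓝 ξ)) {F : Set Z}
    (hF : IsClosed F) (h1 : ∀ k, (μ k : Measure Z) F = 1) : (ξ : Measure Z) F = 1 := by
  refine le_antisymm prob_le_one ?_
  have := ProbabilityMeasure.limsup_measure_closed_le_of_tendsto h hF
  simpa [h1] using this

lemma real_le_of_tendsto [HasOuterApproxClosed Z] {U : Ultrafilter ℕ}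
    {μ : ℕ → ProbabilityMeasure Z} {ξ : ProbabilityMeasure Z} (h : Tendsto μ U (𝓝 ξ)) {E : Set Z}
    (hE : IsClopen E) {c : ℝ} (hc : ∀ k, (μ k : Measure Z).real E ≤ c) :
    (ξ : Measure Z).real E ≤ c := by
  have := ProbabilityMeasure.tendsto_measure_of_isClopen_of_tendsto h hE
  refine le_of_tendsto ((NNReal.tendsto_coe.2 this)) (Eventually.of_forall fun k => ?_)
  simpa using hc k

end OrbitAverage

section Joinings

lemma dbarM_nonneg (μ ν : ProbabilityMeasure (ℕ → Bool)) : 0 ≤ dbarM μ ν := by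
  refine Real.sInf_nonneg ?_
  rintro r ⟨ξ, -, rfl⟩
  exact ENNReal.toReal_nonneg

lemma dbarM_le_of_isJoining {μ ν : ProbabilityMeasure (ℕ → Bool)}
    {ξ : Measure ((ℕ → Bool) × (ℕ → Bool))} (h : IsJoining ξ μ ν) :
    dbarM μ ν ≤ ξ.real {q | q.1 0 ≠ q.2 0} := by
  refine csInf_le ⟨0, ?_⟩ ⟨ξ, h, rfl⟩
  rintro r ⟨ξ, -, rfl⟩
  exact ENNReal.toReal_nonneg

lemma mem_Msigma_iff {X : Set (ℕ → Bool)} {μ : ProbabilityMeasure (ℕ → Bool)} :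
    μ ∈ Msigma X ↔ (μ : Measure (ℕ → Bool)).map shift = μ ∧ (μ : Measure (ℕ → Bool)) X = 1 := by
  rw [← ProbabilityMeasure.ennreal_coeFn_eq_coeFn_toMeasure, ENNReal.coe_eq_one]
  rfl

lemma continuous_shift : Continuous (shift : (ℕ → Bool) → ℕ → Bool) :=
  continuous_pi fun n => continuous_apply (n + 1)

lemma isClopen_apply_ne (c : Bool) : IsClopen {y : ℕ → Bool | y 0 ≠ c} :=
  (isClopen_discrete {c}ᶜ).preimage (continuous_apply 0)

lemma isClopen_fst_ne_snd : IsClopen {q : (ℕ → Bool) × (ℕ → Bool) | q.1 0 ≠ q.2 0} := by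
  have h : Continuous fun q : (ℕ → Bool) × (ℕ → Bool) => (q.1 0, q.2 0) := by fun_prop
  exact (isClopen_discrete {b : Bool × Bool | b.1 ≠ b.2}).preimage h

variable {p : ℕ → ℕ} {s : ℝ}

/-- The Oxtoby shift carries an invariant measure which is close to the fixed point `c^∞`. -/
lemma exists_mem_Msigma_oxtobyShift_real_le (hpos : ∀ k, 0 < p k)
    (hdvd : ∀ k, p k ∣ p (k + 1)) (hratio : ∀ k, 3 * p k ≤ p (k + 1))
    (hs : ∀ L, ∑ k ∈ Finset.range L, (2 * p (k + 1) : ℝ) / (p (k + 2) : ℝ) ≤ s) (c : Bool) :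
    ∃ μ ∈ Msigma (oxtobyShift p), (μ : Measure (ℕ → Bool)).real {y | y 0 ≠ c} ≤ s := by
  obtain ⟨e, he⟩ : ∃ e, ∀ k, decide ((2 * k + e + 1) % 2 = 1) = c := by
    cases c
    · exact ⟨1, fun k => by simp; omega⟩
    · exact ⟨0, fun k => by simp⟩
  have hlim : Tendsto (fun k => p (2 * k + e + 1)) atTop atTop :=
    tendsto_atTop_mono (fun k => by
      have := lt_scale hpos hratio (2 * k + e + 1)
      simp only [id]
      omega) tendsto_id
  obtain ⟨U, ξ, hξ, hinv⟩ := exists_tendsto_orbitAverage continuous_shift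
    (fun _ => diracProba (oxtoby p)) (fun k => hpos (2 * k + e + 1)) hlim
  have hX : IsClosed (oxtobyShift p) := isClosed_closure
  refine ⟨ξ, mem_Msigma_iff.2 ⟨hinv, apply_eq_one_of_tendsto hξ hX fun k => ?_⟩,
    real_le_of_tendsto hξ (isClopen_apply_ne c) fun k => ?_⟩
  · refine orbitAverage_apply_eq _ _ _ hX.measurableSet fun j => ?_
    exact diracProba_toMeasure_apply_of_mem (shift_iterate_mem_oxtobyShift p j)
  · have hE := (isClopen_apply_ne c).isClosed.measurableSet
    have hp : (0 : ℝ) < p (2 * k + e + 1) := by exact_mod_cast hpos _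
    rw [orbitAverage_real _ _ _ hE, inv_mul_le_iff₀ hp]
    have hterm : ∀ j, (diracProba (oxtoby p) : Measure (ℕ → Bool)).real
        (shift^[j] ⁻¹' {y | y 0 ≠ c}) = if oxtoby p j ≠ c then 1 else 0 := fun j => by
      rw [measureReal_def, diracProba_toMeasure_apply' _
        ((continuous_shift.iterate j).measurable hE)]
      simp [Set.indicator_apply, shift_iterate_apply, apply_ite ENNReal.toReal]
    have h := missCount_oxtoby_le hpos hdvd hratio (2 * k + e)
    rw [he k] at h
    simp only [hterm, Finset.sum_boole]
    exact h.trans (mul_le_mul_of_nonneg_left (hs _) hp.le)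

lemma measurable_missCount (n : ℕ) (c : Bool) :
    Measurable fun y : ℕ → Bool => missCount n y c := by
  have : (fun y : ℕ → Bool => missCount n y c)
      = fun y => ∑ j ∈ Finset.range n, if y j ≠ c then 1 else 0 := by
    ext y
    simp only [missCount, Finset.card_filter]
  rw [this]
  exact Finset.measurable_sum _ fun j _ =>
    (measurable_of_finite fun b : Bool => if b ≠ c then 1 else 0).comp (measurable_pi_apply j)

lemma measurable_majority (n : ℕ) : Measurable fun y : ℕ → Bool => majority n y :=
  (measurable_of_countable fun q : ℕ × ℕ => decide (q.1 ≤ q.2)).comp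
    ((measurable_missCount n true).prodMk (measurable_missCount n false))

lemma measurable_missCount_majority (n : ℕ) :
    Measurable fun y : ℕ → Bool => (missCount n y (majority n y) : ℝ) := by
  have : (fun y : ℕ → Bool => (missCount n y (majority n y) : ℝ))
      = fun y => ((if majority n y = true then missCount n y true else missCount n y false : ℕ) :
        ℝ) := by
    ext y
    cases majority n y <;> simp
  rw [this]
  exact (measurable_of_countable _).comp (Measurable.ite
    (measurable_majority n (measurableSet_singleton true)) (measurable_missCount n true)
    (measurable_missCount n false))

lemma integrable_missCount_majority (μ : ProbabilityMeasure (ℕ → Bool)) (n : ℕ) :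
    Integrable (fun y => (missCount n y (majority n y) : ℝ)) (μ : Measure (ℕ → Bool)) :=
  Integrable.of_bound (measurable_missCount_majority n).aestronglyMeasurable n
    (Eventually.of_forall fun y => by simpa using missCount_le n y _)

lemma integral_missCount_majority_le (hpos : ∀ k, 0 < p k)
    (hdvd : ∀ k, p k ∣ p (k + 1)) (hratio : ∀ k, 3 * p k ≤ p (k + 1))
    (hs : ∀ L, ∑ k ∈ Finset.range L, (2 * p (k + 1) : ℝ) / (p (k + 2) : ℝ) ≤ s)
    {μ : ProbabilityMeasure (ℕ → Bool)} (hμ : μ ∈ Msigma (oxtobyShift p)) (L : ℕ) :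
    ∫ y, (missCount (p (L + 1)) y (majority (p (L + 1)) y) : ℝ) ∂(μ : Measure (ℕ → Bool))
      ≤ p (L + 1) * s := by
  rw [mem_Msigma_iff] at hμ
  have hpres : MeasurePreserving shift (μ : Measure (ℕ → Bool)) μ :=
    ⟨continuous_shift.measurable, hμ.1⟩
  set f : (ℕ → Bool) → ℝ := fun y => (missCount (p (L + 1)) y (majority (p (L + 1)) y) : ℝ)
  have hf : Integrable f (μ : Measure (ℕ → Bool)) := integrable_missCount_majority μ _
  have hfj : ∀ j, ∫ y, f (shift^[j] y) ∂(μ : Measure (ℕ → Bool))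
      = ∫ y, f y ∂(μ : Measure (ℕ → Bool)) := fun j => by
    conv_rhs => rw [← (hpres.iterate j).map_eq]
    exact (integral_map (hpres.iterate j).aemeasurable
      (measurable_missCount_majority _).aestronglyMeasurable).symm
  have hint : ∀ j, Integrable (fun y => f (shift^[j] y)) (μ : Measure (ℕ → Bool)) := fun j =>
    (hpres.iterate j).integrable_comp_of_integrable hf
  have hae : ∀ᵐ y ∂(μ : Measure (ℕ → Bool)), y ∈ oxtobyShift p :=
    (prob_compl_eq_zero_iff (isClosed_closure.measurableSet)).2 hμ.2
  have hsum : ∫ y, ∑ j ∈ Finset.range (p (L + 2)), f (shift^[j] y) ∂(μ : Measure (ℕ → Bool))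
      ≤ ∫ _, (p (L + 2) * p (L + 1) * s : ℝ) ∂(μ : Measure (ℕ → Bool)) := by
    refine integral_mono_ae (integrable_finsetSum _ fun j _ => hint j) (integrable_const _) ?_
    filter_upwards [hae] with y hy
    refine (sum_missCount_le hpos hdvd hratio L hy).trans ?_
    gcongr
    exact hs _
  rw [integral_finsetSum _ fun j _ => hint j, integral_const] at hsum
  simp only [hfj, Finset.sum_const, Finset.card_range, nsmul_eq_mul, probReal_univ, one_smul,
    mul_assoc] at hsum
  exact le_of_mul_le_mul_left hsum (by exact_mod_cast hpos _)

lemma shift_iterate_const (j : ℕ) (c : Bool) : shift^[j] (fun _ : ℕ => c) = fun _ => c := by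
  ext i
  rw [shift_iterate_apply]

/-- Every invariant measure on the Oxtoby shift is close to one supported on the two fixed
points. -/
lemma exists_mem_Msigma_const_dbarM_le (hpos : ∀ k, 0 < p k)
    (hdvd : ∀ k, p k ∣ p (k + 1)) (hratio : ∀ k, 3 * p k ≤ p (k + 1))
    (hs : ∀ L, ∑ k ∈ Finset.range L, (2 * p (k + 1) : ℝ) / (p (k + 2) : ℝ) ≤ s)
    {μ : ProbabilityMeasure (ℕ → Bool)} (hμ : μ ∈ Msigma (oxtobyShift p)) :
    ∃ ν ∈ Msigma ({fun _ => false, fun _ => true} : Set (ℕ → Bool)), dbarM μ ν ≤ s := by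
  have hpres : MeasurePreserving shift (μ : Measure (ℕ → Bool)) μ :=
    ⟨continuous_shift.measurable, (mem_Msigma_iff.1 hμ).1⟩
  let T : (ℕ → Bool) × (ℕ → Bool) → (ℕ → Bool) × (ℕ → Bool) := Prod.map shift shift
  have hT : Continuous T := continuous_shift.prodMap continuous_shift
  let G : ℕ → (ℕ → Bool) → (ℕ → Bool) × (ℕ → Bool) :=
    fun k y => (y, fun _ => majority (p (k + 1)) y)
  have hG : ∀ k, Measurable (G k) := fun k =>
    measurable_id.prodMk (measurable_pi_lambda _ fun _ => measurable_majority _)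
  have hTG : ∀ k j y, T^[j] (G k y) = (shift^[j] y, fun _ => majority (p (k + 1)) y) := by
    intro k j y
    simp only [T, G, Prod.map_iterate, Prod.map_apply, shift_iterate_const]
  let μ' : ℕ → ProbabilityMeasure ((ℕ → Bool) × (ℕ → Bool)) :=
    fun k => μ.map (hG k).aemeasurable
  have hμ' : ∀ k j (E : Set ((ℕ → Bool) × (ℕ → Bool))), MeasurableSet E →
      (μ' k : Measure _) (T^[j] ⁻¹' E) = (μ : Measure (ℕ → Bool))
        {y | (shift^[j] y, fun _ => majority (p (k + 1)) y) ∈ E} := by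
    intro k j E hE
    rw [ProbabilityMeasure.toMeasure_map,
      Measure.map_apply (hG k) ((hT.iterate j).measurable hE), ← Set.preimage_comp]
    congr 1
    ext y
    simp [hTG]
  have hlim : Tendsto (fun k => p (k + 1)) atTop atTop :=
    tendsto_atTop_mono (fun k => by
      have := lt_scale hpos hratio (k + 1)
      simp only [id]
      omega) tendsto_id
  obtain ⟨U, ξ, hξ, hinv⟩ := exists_tendsto_orbitAverage hT μ' (fun k => hpos (k + 1)) hlim
  let ν : ProbabilityMeasure (ℕ → Bool) := ξ.map measurable_snd.aemeasurable
  have hν : (ν : Measure (ℕ → Bool)) = (ξ : Measure ((ℕ → Bool) × (ℕ → Bool))).map Prod.snd :=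
    ξ.toMeasure_map measurable_snd.aemeasurable
  have hfst : (ξ : Measure ((ℕ → Bool) × (ℕ → Bool))).map Prod.fst = (μ : Measure (ℕ → Bool)) := by
    have hmap := ProbabilityMeasure.tendsto_map_of_tendsto_of_continuous _ _ hξ continuous_fst
    have hconst : ∀ k, (orbitAverage hT (μ' k) (hpos (k + 1))).map
        continuous_fst.measurable.aemeasurable = μ := by
      intro k
      apply ProbabilityMeasure.toMeasure_injective
      rw [ProbabilityMeasure.toMeasure_map]
      ext E hE
      rw [Measure.map_apply measurable_fst hE]
      refine orbitAverage_apply_eq _ _ _ (measurable_fst hE) fun j => ?_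
      rw [hμ' k j _ (measurable_fst hE)]
      exact (hpres.iterate j).measure_preimage hE.nullMeasurableSet
    simp only [hconst] at hmap
    have := congrArg (fun ν : ProbabilityMeasure _ => (ν : Measure (ℕ → Bool)))
      (tendsto_nhds_unique hmap tendsto_const_nhds)
    simpa using this
  have hclosed : IsClosed ({fun _ => false, fun _ => true} : Set (ℕ → Bool)) :=
    (Set.toFinite _).isClosed
  refine ⟨ν, mem_Msigma_iff.2 ⟨?_, ?_⟩, ?_⟩
  · rw [hν, Measure.map_map continuous_shift.measurable measurable_snd]
    conv_rhs => rw [← hinv, Measure.map_map measurable_snd hT.measurable]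
    rfl
  · rw [hν, Measure.map_apply measurable_snd hclosed.measurableSet]
    refine apply_eq_one_of_tendsto hξ (hclosed.preimage continuous_snd) fun k => ?_
    refine orbitAverage_apply_eq _ _ _ (hclosed.preimage continuous_snd).measurableSet fun j => ?_
    rw [hμ' k j _ (hclosed.preimage continuous_snd).measurableSet]
    have : {y : ℕ → Bool | (shift^[j] y, fun _ : ℕ => majority (p (k + 1)) y) ∈
        Prod.snd ⁻¹' ({fun _ => false, fun _ => true} : Set (ℕ → Bool))} = Set.univ := by
      refine Set.eq_univ_of_forall fun y => ?_
      cases h : majority (p (k + 1)) y <;> simp [h]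
    rw [this, measure_univ]
  · refine (dbarM_le_of_isJoining ⟨hinv, hfst, hν.symm⟩).trans ?_
    refine real_le_of_tendsto hξ isClopen_fst_ne_snd fun k => ?_
    have hE := isClopen_fst_ne_snd.isClosed.measurableSet
    have hp : (0 : ℝ) < p (k + 1) := by exact_mod_cast hpos _
    rw [orbitAverage_real _ _ _ hE, inv_mul_le_iff₀ hp]
    refine le_trans (le_of_eq ?_) (integral_missCount_majority_le hpos hdvd hratio hs hμ k)
    have hset : ∀ j, MeasurableSet {y : ℕ → Bool | y j ≠ majority (p (k + 1)) y} := fun j =>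
      (measurableSet_eq_fun (measurable_pi_apply j) (measurable_majority _)).compl
    have hterm : ∀ j, (μ' k : Measure _).real (T^[j] ⁻¹' {q | q.1 0 ≠ q.2 0})
        = ∫ y, {y : ℕ → Bool | y j ≠ majority (p (k + 1)) y}.indicator (fun _ => (1 : ℝ)) y
          ∂(μ : Measure (ℕ → Bool)) := by
      intro j
      rw [integral_indicator (hset j), setIntegral_const, smul_eq_mul, mul_one, measureReal_def,
        measureReal_def, hμ' k j _ hE]
      congr 2
      ext y
      simp [shift_iterate_apply]
    simp only [hterm]
    rw [← integral_finsetSum _ fun j _ => (integrable_const _).indicator (hset j)]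
    refine integral_congr_ae (Eventually.of_forall fun y => ?_)
    simp only [missCount, Set.indicator_apply, Set.mem_ofPred_eq, Finset.sum_boole]

/-- The joining of `μ` with the point mass at `c^∞`. -/
noncomputable def constJoining (c : Bool) (μ : ProbabilityMeasure (ℕ → Bool)) :
    Measure ((ℕ → Bool) × (ℕ → Bool)) :=
  (μ : Measure (ℕ → Bool)).map fun y => (y, fun _ => c)

lemma isJoining_constJoining (c : Bool) {μ : ProbabilityMeasure (ℕ → Bool)}
    (hμ : (μ : Measure (ℕ → Bool)).map shift = μ) :
    IsJoining (constJoining c μ) μ (diracProba fun _ => c) := by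
  have hm : Measurable fun y : ℕ → Bool => (y, fun _ : ℕ => c) :=
    measurable_id.prodMk measurable_const
  refine ⟨?_, ?_, ?_⟩
  · rw [constJoining, Measure.map_map (continuous_shift.prodMap continuous_shift).measurable hm]
    conv_rhs => rw [← hμ, Measure.map_map hm continuous_shift.measurable]
    rfl
  · rw [constJoining, Measure.map_map measurable_fst hm]
    exact Measure.map_id
  · rw [constJoining, Measure.map_map measurable_snd hm]
    refine (Measure.map_const _ _).trans ?_
    rw [measure_univ, one_smul]
    rfl

lemma constJoining_real (c : Bool) (μ : ProbabilityMeasure (ℕ → Bool)) :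
    (constJoining c μ).real {q | q.1 0 ≠ q.2 0}
      = (μ : Measure (ℕ → Bool)).real {y | y 0 ≠ c} := by
  have hm : Measurable fun y : ℕ → Bool => (y, fun _ : ℕ => c) :=
    measurable_id.prodMk measurable_const
  rw [constJoining, measureReal_def, Measure.map_apply hm isClopen_fst_ne_snd.isClosed.measurableSet]
  rfl

/-- Every invariant measure supported on the two fixed points is close to one on the Oxtoby
shift. -/
lemma exists_mem_Msigma_oxtobyShift_dbarM_le (hpos : ∀ k, 0 < p k)
    (hdvd : ∀ k, p k ∣ p (k + 1)) (hratio : ∀ k, 3 * p k ≤ p (k + 1))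
    (hs : ∀ L, ∑ k ∈ Finset.range L, (2 * p (k + 1) : ℝ) / (p (k + 2) : ℝ) ≤ s)
    {ν : ProbabilityMeasure (ℕ → Bool)}
    (hν : ν ∈ Msigma ({fun _ => false, fun _ => true} : Set (ℕ → Bool))) :
    ∃ μ ∈ Msigma (oxtobyShift p), dbarM μ ν ≤ s := by
  obtain ⟨-, hν1⟩ := mem_Msigma_iff.1 hν
  have hne : (fun _ : ℕ => false) ≠ fun _ => true := fun h => by simpa using congrFun h 0
  set w : Bool → ENNReal := fun c => (ν : Measure (ℕ → Bool)) {fun _ => c}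
  have hwsum : w false + w true = 1 := by
    rw [← hν1, ← Set.singleton_union, measure_union (by simpa using hne)
      (measurableSet_singleton _)]
  have hwtop : ∀ c, w c ≠ ⊤ := fun c => measure_ne_top _ _
  have hνeq : (ν : Measure (ℕ → Bool))
      = w false • Measure.dirac (fun _ => false) + w true • Measure.dirac fun _ => true := by
    have hmeas : MeasurableSet ({fun _ => false, fun _ => true} : Set (ℕ → Bool)) :=
      (Set.toFinite _).measurableSet
    have hae : ∀ᵐ y ∂(ν : Measure (ℕ → Bool)),
        y ∈ ({fun _ => false, fun _ => true} : Set (ℕ → Bool)) :=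
      (prob_compl_eq_zero_iff hmeas).2 hν1
    rw [← Measure.restrict_eq_self_of_ae_mem hae, ← Set.singleton_union,
      Measure.restrict_union (by simpa using hne) (measurableSet_singleton _),
      Measure.restrict_singleton, Measure.restrict_singleton]
  choose m hm hmle using exists_mem_Msigma_oxtobyShift_real_le hpos hdvd hratio hs
  have hinv : ∀ c, (m c : Measure (ℕ → Bool)).map shift = m c := fun c =>
    (mem_Msigma_iff.1 (hm c)).1
  let μ : ProbabilityMeasure (ℕ → Bool) :=
    ⟨w false • (m false : Measure (ℕ → Bool)) + w true • (m true : Measure (ℕ → Bool)), ⟨by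
      simp [hwsum]⟩⟩
  have hμ : (μ : Measure (ℕ → Bool))
      = w false • (m false : Measure (ℕ → Bool)) + w true • (m true : Measure (ℕ → Bool)) := rfl
  have hj := fun c => isJoining_constJoining c (hinv c)
  have hshift := (continuous_shift.prodMap continuous_shift).measurable
  refine ⟨μ, mem_Msigma_iff.2 ⟨?_, ?_⟩, (dbarM_le_of_isJoining
    (ξ := w false • constJoining false (m false) + w true • constJoining true (m true))
    ⟨?_, ?_, ?_⟩).trans ?_⟩
  · rw [hμ, Measure.map_add _ _ continuous_shift.measurable, Measure.map_smul, Measure.map_smul,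
      hinv, hinv]
  · rw [hμ]
    simp [(mem_Msigma_iff.1 (hm _)).2, hwsum]
  · rw [Measure.map_add _ _ hshift, Measure.map_smul, Measure.map_smul, (hj _).1, (hj _).1]
  · rw [Measure.map_add _ _ measurable_fst, Measure.map_smul, Measure.map_smul, (hj _).2.1,
      (hj _).2.1, hμ]
  · rw [Measure.map_add _ _ measurable_snd, Measure.map_smul, Measure.map_smul, (hj _).2.2,
      (hj _).2.2, hνeq]
    rfl
  · have hfin : ∀ c, IsFiniteMeasure (constJoining c (m c)) := fun c =>
      inferInstanceAs (IsFiniteMeasure ((m c : Measure (ℕ → Bool)).map _))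
    have hfin' : ∀ c, IsFiniteMeasure (w c • constJoining c (m c)) := fun c =>
      Measure.smul_finite _ (hwtop c)
    have hone : (w false).toReal + (w true).toReal = 1 := by
      rw [← ENNReal.toReal_add (hwtop _) (hwtop _), hwsum, ENNReal.toReal_one]
    rw [measureReal_add_apply, measureReal_ennreal_smul_apply, measureReal_ennreal_smul_apply,
      constJoining_real, constJoining_real]
    calc _ ≤ (w false).toReal * s + (w true).toReal * s := by
          gcongr <;> exact hmle _
      _ = s := by rw [← add_mul, hone, one_mul]

end Joinings

lemma hausdist_dbarM_le {P Q : Set (ProbabilityMeasure (ℕ → Bool))} {s : ℝ} (hs : 0 ≤ s)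
    (hP : ∀ μ ∈ P, ∃ ν ∈ Q, dbarM μ ν ≤ s) (hQ : ∀ ν ∈ Q, ∃ μ ∈ P, dbarM μ ν ≤ s) :
    hausdist dbarM P Q ≤ s := by
  refine max_le (Real.iSup_le ?_ hs) (Real.iSup_le ?_ hs)
  · rintro ⟨μ, hμ⟩
    obtain ⟨ν, hν, h⟩ := hP μ hμ
    refine (ciInf_le ⟨0, ?_⟩ (⟨ν, hν⟩ : Q)).trans h
    rintro _ ⟨q, rfl⟩
    exact dbarM_nonneg _ _
  · rintro ⟨ν, hν⟩
    obtain ⟨μ, hμ, h⟩ := hQ ν hν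
    refine (ciInf_le ⟨0, ?_⟩ (⟨μ, hμ⟩ : P)).trans h
    rintro _ ⟨q, rfl⟩
    exact dbarM_nonneg _ _

/-- for a scale `p` with `Σ 2p_k/p_{k+1} < δ < 1/2`, the Oxtoby shift
`X(p)` is `d̄^H`-far from `{0^∞, 1^∞}` but `d̄_M^H`-close to it. -/
theorem statement10 (δ : ℝ) (hδ0 : 0 < δ) (hδhalf : δ < 1 / 2)
    (p : ℕ → ℕ) (hp0 : p 0 = 1) (hpos : ∀ k, 0 < p k)
    (hdvd : ∀ k, p k ∣ p (k + 1)) (hratio : ∀ k, 3 * p k ≤ p (k + 1))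
    (hsummable : Summable (fun k : ℕ => (2 * p (k + 1) : ℝ) / (p (k + 2) : ℝ)))
    (hsum : ∑' k : ℕ, (2 * p (k + 1) : ℝ) / (p (k + 2) : ℝ) < δ) :
    1 - δ < hausdist dbar (oxtobyShift p)
        ({fun _ => false, fun _ => true} : Set (ℕ → Bool)) ∧
    hausdist dbarM (Msigma (oxtobyShift p))
        (Msigma ({fun _ => false, fun _ => true} : Set (ℕ → Bool))) < δ := by
  have hs : ∀ L, ∑ k ∈ Finset.range L, (2 * p (k + 1) : ℝ) / (p (k + 2) : ℝ)
      ≤ ∑' k : ℕ, (2 * p (k + 1) : ℝ) / (p (k + 2) : ℝ) := fun L =>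
    hsummable.sum_le_tsum _ fun k _ => by positivity
  exact ⟨lt_hausdist_dbar_oxtobyShift hpos hdvd hratio hsum hs,
    (hausdist_dbarM_le (tsum_nonneg fun k => by positivity)
      (fun μ hμ => exists_mem_Msigma_const_dbarM_le hpos hdvd hratio hs hμ)
      (fun ν hν => exists_mem_Msigma_oxtobyShift_dbarM_le hpos hdvd hratio hs hν)).trans_lt hsum⟩

end DbarPaper
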